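/- Let q be a prime power with q ≡ 1 (mod 52). Then (q,13) gives a 3-design if and only if (q,26) gives a 3-design; that is, the PSL(2,q)-orbit of the subgroup of order 13 of F_q^× is the block set of a 3-design on PG(1,q) if and only if the PSL(2,q)-orbit of the subgroup of order 26 of F_q^× is the block set of a 3-design on PG(1,q). -/

import Mathlib

/-!
Setting: `F` is a finite field of order `q`. The projective line `PG(1,q)` is
modelled as `Projectivization F (Fin 2 → F)`. Since scalar matrices act trivially
on the projective line, the images of a set under all elements of `SL(2,F)` form
exactly its `PSL(2,F)`-orbit; `mapSL g` is the map of the projective line induced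
by `g : SL(2,F)`. For `k ∣ q - 1`, the unique subgroup of order `k` of `Fˣ` is the
set of `k`-th roots of unity `{x : F | x ^ k = 1}`, embedded into the projective
line via `x ↦ [x : 1]`. `(q, k)` gives a 3-design iff there is `lam > 0` such that
every 3-subset of the projective line lies in exactly `lam` blocks of the orbit.
-/

noncomputable section

open Matrix

/-- The point at infinity `[1 : 0]` of the projective line over `F`. -/
def inftyPt (F : Type) [Field F] : Projectivization F (Fin 2 → F) :=
  Projectivization.mk F ![1, 0] (by
    intro h
    simpa using congrFun h 0)

/-- The embedding of `F` into the projective line, `x ↦ [x : 1]`. -/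
def embedPt (F : Type) [Field F] (x : F) : Projectivization F (Fin 2 → F) :=
  Projectivization.mk F ![x, 1] (by
    intro h
    simpa using congrFun h 1)

/-- The action of `g : SL(2,F)` on the projective line (as linear fractional
transformation). -/
def mapSL {F : Type} [Field F] (g : Matrix.SpecialLinearGroup (Fin 2) F) :
    Projectivization F (Fin 2 → F) → Projectivization F (Fin 2 → F) :=
  Projectivization.map (Matrix.SpecialLinearGroup.toLin' g : (Fin 2 → F) →ₗ[F] (Fin 2 → F))
    (Matrix.SpecialLinearGroup.toLin' g).injective

/-- The starter block: the unique subgroup of order `k` of `Fˣ` (the `k`-th roots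
of unity, for `k ∣ q - 1`), regarded as a subset of the projective line. -/
def starterB (F : Type) [Field F] (k : ℕ) : Set (Projectivization F (Fin 2 → F)) :=
  embedPt F '' {x : F | x ^ k = 1}

/-- The `PSL(2,F)`-orbit `GB` of the starter block. -/
def designBlocks (F : Type) [Field F] (k : ℕ) :
    Set (Set (Projectivization F (Fin 2 → F))) :=
  {S | ∃ g : Matrix.SpecialLinearGroup (Fin 2) F, S = mapSL g '' starterB F k}

/-- `GB` is the block set of a `3-(q+1, k, lam)` design: `lam` is positive and every
3-subset of the projective line is contained in exactly `lam` blocks. -/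
def isThreeDesign (F : Type) [Field F] (k lam : ℕ) : Prop :=
  0 < lam ∧
    ∀ T : Finset (Projectivization F (Fin 2 → F)), T.card = 3 →
      {S ∈ designBlocks F k | (T : Set (Projectivization F (Fin 2 → F))) ⊆ S}.ncard = lam

/-- `(q, k)` gives a 3-design. -/
def gives3Design (F : Type) [Field F] (k : ℕ) : Prop :=
  ∃ lam : ℕ, isThreeDesign F k lam

/-- Theorem 5.1, (i) ↔ (ii): for `q ≡ 1 (mod 52)`, `(q,13)` gives a 3-design iff
`(q,26)` gives a 3-design. -/
def PA (a b c d e g : ℤ) : ℤ := 6*(a*a*b) + 12*(a*b*c) + 12*(a*c*d) + 12*(a*d*e) + 12*(a*e*g) + 6*(a*g*g) + 6*(b*b*d) + 12*(b*c*e) + 12*(b*d*g) + 12*(b*e*g) + 6*(c*c*g) + 12*(c*d*g) + 6*(c*e*e) + 6*(d*d*e)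
def PB (a b c d e g x h1 h2 h3 h4 h5 h6 : ℤ) : ℤ := 4*(a*h1*x) + 4*(a*h1*h2) + 4*(a*h2*h3) + 4*(a*h3*h4) + 4*(a*h4*h5) + 4*(a*h5*h6) + 2*(a*h6*h6) + 4*(b*h2*x) + 2*(b*h1*h1) + 4*(b*h1*h3) + 4*(b*h2*h4) + 4*(b*h3*h5) + 4*(b*h4*h6) + 4*(b*h5*h6) + 4*(c*h3*x) + 4*(c*h1*h2) + 4*(c*h1*h4) + 4*(c*h2*h5) + 4*(c*h3*h6) + 4*(c*h4*h6) + 2*(c*h5*h5) + 4*(d*h4*x) + 4*(d*h1*h3) + 2*(d*h2*h2) + 4*(d*h1*h5) + 4*(d*h2*h6) + 4*(d*h3*h6) + 4*(d*h4*h5) + 4*(e*h5*x) + 4*(e*h1*h4) + 4*(e*h2*h3) + 4*(e*h1*h6) + 4*(e*h2*h6) + 4*(e*h3*h5) + 2*(e*h4*h4) + 4*(g*h6*x) + 4*(g*h1*h5) + 4*(g*h2*h4) + 2*(g*h3*h3) + 4*(g*h1*h6) + 4*(g*h2*h5) + 4*(g*h3*h4)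
def vf (a b c d e g : ℤ) : Fin 13 → ℤ := ![0, a, b, c, d, e, g, g, e, d, c, b, a]
def vh (x h1 h2 h3 h4 h5 h6 : ℤ) : Fin 13 → ℤ := ![x, h1, h2, h3, h4, h5, h6, h6, h5, h4, h3, h2, h1]
def T3 (f g h : Fin 13 → ℤ) : ℤ := ∑ a, ∑ b, f (-a) * g (a - b) * h b

set_option maxRecDepth 20000 in
theorem T3_expand (p q r : Fin 13 → ℤ) : T3 p q r = (p 0 * q 0 * r 0 + p 0 * q 12 * r 1 + p 0 * q 11 * r 2 + p 0 * q 10 * r 3 + p 0 * q 9 * r 4 + p 0 * q 8 * r 5 + p 0 * q 7 * r 6 + p 0 * q 6 * r 7 + p 0 * q 5 * r 8 + p 0 * q 4 * r 9 + p 0 * q 3 * r 10 + p 0 * q 2 * r 11 + p 0 * q 1 * r 12)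
    + (p 12 * q 1 * r 0 + p 12 * q 0 * r 1 + p 12 * q 12 * r 2 + p 12 * q 11 * r 3 + p 12 * q 10 * r 4 + p 12 * q 9 * r 5 + p 12 * q 8 * r 6 + p 12 * q 7 * r 7 + p 12 * q 6 * r 8 + p 12 * q 5 * r 9 + p 12 * q 4 * r 10 + p 12 * q 3 * r 11 + p 12 * q 2 * r 12)
    + (p 11 * q 2 * r 0 + p 11 * q 1 * r 1 + p 11 * q 0 * r 2 + p 11 * q 12 * r 3 + p 11 * q 11 * r 4 + p 11 * q 10 * r 5 + p 11 * q 9 * r 6 + p 11 * q 8 * r 7 + p 11 * q 7 * r 8 + p 11 * q 6 * r 9 + p 11 * q 5 * r 10 + p 11 * q 4 * r 11 + p 11 * q 3 * r 12)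
    + (p 10 * q 3 * r 0 + p 10 * q 2 * r 1 + p 10 * q 1 * r 2 + p 10 * q 0 * r 3 + p 10 * q 12 * r 4 + p 10 * q 11 * r 5 + p 10 * q 10 * r 6 + p 10 * q 9 * r 7 + p 10 * q 8 * r 8 + p 10 * q 7 * r 9 + p 10 * q 6 * r 10 + p 10 * q 5 * r 11 + p 10 * q 4 * r 12)
    + (p 9 * q 4 * r 0 + p 9 * q 3 * r 1 + p 9 * q 2 * r 2 + p 9 * q 1 * r 3 + p 9 * q 0 * r 4 + p 9 * q 12 * r 5 + p 9 * q 11 * r 6 + p 9 * q 10 * r 7 + p 9 * q 9 * r 8 + p 9 * q 8 * r 9 + p 9 * q 7 * r 10 + p 9 * q 6 * r 11 + p 9 * q 5 * r 12)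
    + (p 8 * q 5 * r 0 + p 8 * q 4 * r 1 + p 8 * q 3 * r 2 + p 8 * q 2 * r 3 + p 8 * q 1 * r 4 + p 8 * q 0 * r 5 + p 8 * q 12 * r 6 + p 8 * q 11 * r 7 + p 8 * q 10 * r 8 + p 8 * q 9 * r 9 + p 8 * q 8 * r 10 + p 8 * q 7 * r 11 + p 8 * q 6 * r 12)
    + (p 7 * q 6 * r 0 + p 7 * q 5 * r 1 + p 7 * q 4 * r 2 + p 7 * q 3 * r 3 + p 7 * q 2 * r 4 + p 7 * q 1 * r 5 + p 7 * q 0 * r 6 + p 7 * q 12 * r 7 + p 7 * q 11 * r 8 + p 7 * q 10 * r 9 + p 7 * q 9 * r 10 + p 7 * q 8 * r 11 + p 7 * q 7 * r 12)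
    + (p 6 * q 7 * r 0 + p 6 * q 6 * r 1 + p 6 * q 5 * r 2 + p 6 * q 4 * r 3 + p 6 * q 3 * r 4 + p 6 * q 2 * r 5 + p 6 * q 1 * r 6 + p 6 * q 0 * r 7 + p 6 * q 12 * r 8 + p 6 * q 11 * r 9 + p 6 * q 10 * r 10 + p 6 * q 9 * r 11 + p 6 * q 8 * r 12)
    + (p 5 * q 8 * r 0 + p 5 * q 7 * r 1 + p 5 * q 6 * r 2 + p 5 * q 5 * r 3 + p 5 * q 4 * r 4 + p 5 * q 3 * r 5 + p 5 * q 2 * r 6 + p 5 * q 1 * r 7 + p 5 * q 0 * r 8 + p 5 * q 12 * r 9 + p 5 * q 11 * r 10 + p 5 * q 10 * r 11 + p 5 * q 9 * r 12)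
    + (p 4 * q 9 * r 0 + p 4 * q 8 * r 1 + p 4 * q 7 * r 2 + p 4 * q 6 * r 3 + p 4 * q 5 * r 4 + p 4 * q 4 * r 5 + p 4 * q 3 * r 6 + p 4 * q 2 * r 7 + p 4 * q 1 * r 8 + p 4 * q 0 * r 9 + p 4 * q 12 * r 10 + p 4 * q 11 * r 11 + p 4 * q 10 * r 12)
    + (p 3 * q 10 * r 0 + p 3 * q 9 * r 1 + p 3 * q 8 * r 2 + p 3 * q 7 * r 3 + p 3 * q 6 * r 4 + p 3 * q 5 * r 5 + p 3 * q 4 * r 6 + p 3 * q 3 * r 7 + p 3 * q 2 * r 8 + p 3 * q 1 * r 9 + p 3 * q 0 * r 10 + p 3 * q 12 * r 11 + p 3 * q 11 * r 12)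
    + (p 2 * q 11 * r 0 + p 2 * q 10 * r 1 + p 2 * q 9 * r 2 + p 2 * q 8 * r 3 + p 2 * q 7 * r 4 + p 2 * q 6 * r 5 + p 2 * q 5 * r 6 + p 2 * q 4 * r 7 + p 2 * q 3 * r 8 + p 2 * q 2 * r 9 + p 2 * q 1 * r 10 + p 2 * q 0 * r 11 + p 2 * q 12 * r 12)
    + (p 1 * q 12 * r 0 + p 1 * q 11 * r 1 + p 1 * q 10 * r 2 + p 1 * q 9 * r 3 + p 1 * q 8 * r 4 + p 1 * q 7 * r 5 + p 1 * q 6 * r 6 + p 1 * q 5 * r 7 + p 1 * q 4 * r 8 + p 1 * q 3 * r 9 + p 1 * q 2 * r 10 + p 1 * q 1 * r 11 + p 1 * q 0 * r 12) := by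
  simp only [T3, Fin.sum_univ_succ, Fin.sum_univ_zero]
  simp only [add_zero, ← add_assoc]
  rfl
theorem Tfff (a b c d e g : ℤ) : T3 (vf a b c d e g) (vf a b c d e g) (vf a b c d e g) = PA a b c d e g := by
  rw [T3_expand]
  set_option linter.unusedSimpArgs false in
  simp [vf, vh, PA, PB]
  ring
theorem Tfhh (a b c d e g x h1 h2 h3 h4 h5 h6 : ℤ) : T3 (vf a b c d e g) (vh x h1 h2 h3 h4 h5 h6) (vh x h1 h2 h3 h4 h5 h6) = PB a b c d e g x h1 h2 h3 h4 h5 h6 := by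
  rw [T3_expand]
  set_option linter.unusedSimpArgs false in
  simp [vf, vh, PA, PB]
  ring
theorem Thfh (a b c d e g x h1 h2 h3 h4 h5 h6 : ℤ) : T3 (vh x h1 h2 h3 h4 h5 h6) (vf a b c d e g) (vh x h1 h2 h3 h4 h5 h6) = PB a b c d e g x h1 h2 h3 h4 h5 h6 := by
  rw [T3_expand]
  set_option linter.unusedSimpArgs false in
  simp [vf, vh, PA, PB]
  ring
theorem Thhf (a b c d e g x h1 h2 h3 h4 h5 h6 : ℤ) : T3 (vh x h1 h2 h3 h4 h5 h6) (vh x h1 h2 h3 h4 h5 h6) (vf a b c d e g) = PB a b c d e g x h1 h2 h3 h4 h5 h6 := by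
  rw [T3_expand]
  set_option linter.unusedSimpArgs false in
  simp [vf, vh, PA, PB]
  ring
def bs (b : Bool) : ℤ := if b then 1 else -1
def tf (a b c d e g : Bool) : Fin 13 → ℤ := vf (bs a) (bs b) (bs c) (bs d) (bs e) (bs g)
def th (x : Bool) (f : Fin 13 → ℤ) : Fin 13 → ℤ := fun i => if i = 0 then bs x else f i * f (i + i)

theorem th_eq (a b c d e g x : Bool) : th x (tf a b c d e g) =
    vh (bs x) (bs a * bs b) (bs b * bs d) (bs c * bs g) (bs d * bs e) (bs e * bs c) (bs g * bs a) := by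
  funext i
  fin_cases i <;> rfl

theorem key0 : ∀ a b c d e g x : Bool, PA (bs a) (bs b) (bs c) (bs d) (bs e) (bs g) = 0 ↔
    PA (bs a) (bs b) (bs c) (bs d) (bs e) (bs g) + 3 * PB (bs a) (bs b) (bs c) (bs d) (bs e) (bs g)
    (bs x) (bs a * bs b) (bs b * bs d) (bs c * bs g) (bs d * bs e) (bs e * bs c) (bs g * bs a) = 0 := by
  decide +kernel

theorem key (a b c d e g x : Bool) : T3 (tf a b c d e g) (tf a b c d e g) (tf a b c d e g) = 0 ↔
    2 * T3 (tf a b c d e g) (tf a b c d e g) (tf a b c d e g)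
    + 2 * T3 (tf a b c d e g) (th x (tf a b c d e g)) (th x (tf a b c d e g))
    + 2 * T3 (th x (tf a b c d e g)) (tf a b c d e g) (th x (tf a b c d e g))
    + 2 * T3 (th x (tf a b c d e g)) (th x (tf a b c d e g)) (tf a b c d e g) = 0 := by
  rw [th_eq, tf, Tfff, Tfhh, Thfh, Thhf]
  have := key0 a b c d e g x
  constructor
  · intro h
    have := this.1 h
    linarith
  · intro h
    apply this.2
    linarith

abbrev PL (F : Type) [Field F] := Projectivization F (Fin 2 → F)

def DD {F : Type} [Field F] (u v : Fin 2 → F) : F := u 0 * v 1 - u 1 * v 0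

def sg {F : Type} [Field F] [Fintype F] [DecidableEq F] (t : PL F × PL F × PL F) : ℤ :=
  quadraticChar F (DD t.1.rep t.2.1.rep * DD t.2.1.rep t.2.2.rep * DD t.2.2.rep t.1.rep)

section
set_option linter.unusedSectionVars false
variable {F : Type} [Field F] [Fintype F] [DecidableEq F]

theorem sg_mk (u v w : Fin 2 → F) (hu : u ≠ 0) (hv : v ≠ 0) (hw : w ≠ 0) :
    sg (Projectivization.mk F u hu, Projectivization.mk F v hv, Projectivization.mk F w hw)
      = quadraticChar F (DD u v * DD v w * DD w u) := by
  obtain ⟨a, ha⟩ := Projectivization.exists_smul_eq_mk_rep F u hu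
  obtain ⟨b, hb⟩ := Projectivization.exists_smul_eq_mk_rep F v hv
  obtain ⟨c, hc⟩ := Projectivization.exists_smul_eq_mk_rep F w hw
  unfold sg
  simp only [← ha, ← hb, ← hc]
  have : DD (a • u) (b • v) * DD (b • v) (c • w) * DD (c • w) (a • u)
      = ((a : F) * b * c) ^ 2 * (DD u v * DD v w * DD w u) := by
    simp only [DD, Pi.smul_apply, Units.smul_def, smul_eq_mul]; ring
  rw [this, map_mul, quadraticChar_sq_one']
  · simp
  · simp

def mapL (e : (Fin 2 → F) ≃ₗ[F] (Fin 2 → F)) : PL F → PL F :=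
  Projectivization.map (e : (Fin 2 → F) →ₗ[F] (Fin 2 → F)) e.injective

def mapT {α β : Type} (f : α → β) (t : α × α × α) : β × β × β := (f t.1, f t.2.1, f t.2.2)

theorem sg_mapL (e : (Fin 2 → F) ≃ₗ[F] (Fin 2 → F)) (d : F)
    (h : ∀ u v, DD (e u) (e v) = d * DD u v) (t : PL F × PL F × PL F) :
    sg (mapT (mapL e) t) = quadraticChar F d ^ 3 * sg t := by
  obtain ⟨p, q, r⟩ := t
  induction p using Projectivization.ind with | h u hu
  induction q using Projectivization.ind with | h v hv
  induction r using Projectivization.ind with | h w hw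
  simp only [mapT, mapL, Projectivization.map_mk]
  rw [sg_mk, sg_mk]
  simp only [LinearEquiv.coe_coe, h, map_mul]
  ring

theorem DD_SL (g : Matrix.SpecialLinearGroup (Fin 2) F) (u v : Fin 2 → F) :
    DD (Matrix.SpecialLinearGroup.toLin' g u) (Matrix.SpecialLinearGroup.toLin' g v) = DD u v := by
  have h := g.det_coe
  rw [Matrix.det_fin_two] at h
  simp only [DD, Matrix.SpecialLinearGroup.toLin'_apply, Matrix.toLin'_apply, Matrix.mulVec,
    dotProduct, Fin.sum_univ_two]
  linear_combination (u 0 * v 1 - u 1 * v 0) * h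

theorem sg_SL (g : Matrix.SpecialLinearGroup (Fin 2) F) (t : PL F × PL F × PL F) :
    sg (mapT (mapSL g) t) = sg t := by
  have := sg_mapL (Matrix.SpecialLinearGroup.toLin' g) 1 (by intro u v; rw [DD_SL, one_mul]) t
  rw [map_one, one_pow, one_mul] at this; exact this

theorem mapSL_mul (g h : Matrix.SpecialLinearGroup (Fin 2) F) (p : PL F) :
    mapSL (g * h) p = mapSL g (mapSL h p) := by
  induction p using Projectivization.ind with | h u hu
  simp only [mapSL, Projectivization.map_mk, map_mul]
  rfl

theorem mapSL_one (p : PL F) : mapSL (1 : Matrix.SpecialLinearGroup (Fin 2) F) p = p := by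
  induction p using Projectivization.ind with | h u hu
  simp only [mapSL, Projectivization.map_mk, map_one]
  rfl

def eSL (g : Matrix.SpecialLinearGroup (Fin 2) F) : PL F ≃ PL F where
  toFun := mapSL g
  invFun := mapSL g⁻¹
  left_inv p := by rw [← mapSL_mul, inv_mul_cancel, mapSL_one]
  right_inv p := by rw [← mapSL_mul, mul_inv_cancel, mapSL_one]

def eT {α β : Type} (e : α ≃ β) : α × α × α ≃ β × β × β := e.prodCongr (e.prodCongr e)

theorem DD_ne {u v : Fin 2 → F} (hu : u ≠ 0) (hv : v ≠ 0) :
    DD u v = 0 ↔ Projectivization.mk F u hu = Projectivization.mk F v hv := by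
  rw [Projectivization.mk_eq_mk_iff']
  constructor
  · intro h
    unfold DD at h
    by_cases h0 : v 0 = 0
    · have h1 : v 1 ≠ 0 := by
        intro h1; apply hv; ext i; fin_cases i <;> simp [h0, h1]
      refine ⟨u 1 / v 1, ?_⟩
      have : u 0 = 0 := by
        rw [h0] at h; simpa [h1] using h
      ext i; fin_cases i
      · simp [h0, this]
      · simp; field_simp
    · refine ⟨u 0 / v 0, ?_⟩
      ext i; fin_cases i
      · simp; field_simp
      · simp; field_simp; linear_combination h
  · rintro ⟨a, rfl⟩
    simp [DD]; ring

theorem sg_eq_zero (p q r : PL F) : sg (p, q, r) = 0 ↔ p = q ∨ q = r ∨ r = p := by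
  induction p using Projectivization.ind with | h u hu
  induction q using Projectivization.ind with | h v hv
  induction r using Projectivization.ind with | h w hw
  rw [sg_mk, quadraticChar_eq_zero_iff, mul_eq_zero, mul_eq_zero, DD_ne hu hv, DD_ne hv hw,
    DD_ne hw hu, or_assoc]

theorem sg_trans (t t' : PL F × PL F × PL F) (h0 : sg t ≠ 0) (h : sg t = sg t') :
    ∃ g : Matrix.SpecialLinearGroup (Fin 2) F, mapT (mapSL g) t = t' := by
  obtain ⟨p, q, r⟩ := t
  obtain ⟨p', q', r'⟩ := t'
  have h0' := h ▸ h0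
  induction p using Projectivization.ind with | h u hu
  induction q using Projectivization.ind with | h v hv
  induction r using Projectivization.ind with | h w hw
  induction p' using Projectivization.ind with | h u' hu'
  induction q' using Projectivization.ind with | h v' hv'
  induction r' using Projectivization.ind with | h w' hw'
  rw [sg_mk] at h h0
  rw [sg_mk] at h h0'
  have hA : DD u v * DD v w * DD w u ≠ 0 := fun hh => h0 (by rw [hh]; simp)
  have hA' : DD u' v' * DD v' w' * DD w' u' ≠ 0 := fun hh => h0' (by rw [hh]; simp)
  have hB : quadraticChar F ((DD u v * DD v w * DD w u) * (DD u' v' * DD v' w' * DD w' u')) = 1 := by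
    rw [map_mul, h, ← sq, quadraticChar_sq_one hA']
  obtain ⟨l, hl⟩ := (quadraticChar_one_iff_isSquare (mul_ne_zero hA hA')).1 hB
  have n1 : DD u v ≠ 0 := fun hh => hA (by rw [hh]; ring)
  have n2 : DD v w ≠ 0 := fun hh => hA (by rw [hh]; ring)
  have n3 : DD w u ≠ 0 := fun hh => hA (by rw [hh]; ring)
  have n1' : DD u' v' ≠ 0 := fun hh => hA' (by rw [hh]; ring)
  have n2' : DD v' w' ≠ 0 := fun hh => hA' (by rw [hh]; ring)
  have n3' : DD w' u' ≠ 0 := fun hh => hA' (by rw [hh]; ring)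
  set m := l / (DD u' v' * DD v' w' * DD w' u') with hm
  have hm2 : m ^ 2 * (DD u' v' * DD v' w' * DD w' u') = DD u v * DD v w * DD w u := by
    rw [hm, div_pow, sq l, ← hl]; field_simp
  have hm0 : m ≠ 0 := by
    intro hh; rw [hh] at hm2; apply hA; rw [← hm2]; ring
  obtain ⟨a, ha⟩ : ∃ a, a * DD v w = m * DD v' w' := ⟨m * DD v' w' / DD v w, by field_simp⟩
  obtain ⟨b, hb⟩ : ∃ b, b * DD w u = m * DD w' u' := ⟨m * DD w' u' / DD w u, by field_simp⟩
  have hab : a * b * DD u' v' = DD u v := by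
    apply mul_right_cancel₀ (mul_ne_zero n2 n3)
    linear_combination (b * DD w u * DD u' v') * ha + (m * DD v' w' * DD u' v') * hb + hm2
  have ha0 : a ≠ 0 := by rintro rfl; apply n1; rw [← hab]; ring
  have hb0 : b ≠ 0 := by rintro rfl; apply n1; rw [← hab]; ring
  let M : Matrix (Fin 2) (Fin 2) F :=
    !![(a * v 1 * u' 0 - b * u 1 * v' 0) / DD u v, (-a * v 0 * u' 0 + b * u 0 * v' 0) / DD u v;
       (a * v 1 * u' 1 - b * u 1 * v' 1) / DD u v, (-a * v 0 * u' 1 + b * u 0 * v' 1) / DD u v]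
  have hM : M.det = 1 := by
    rw [Matrix.det_fin_two_of]
    have : (a * v 1 * u' 0 - b * u 1 * v' 0) * (-a * v 0 * u' 1 + b * u 0 * v' 1)
       - (-a * v 0 * u' 0 + b * u 0 * v' 0) * (a * v 1 * u' 1 - b * u 1 * v' 1) = DD u v ^ 2 := by
      have e : DD u v ^ 2 = (a * b * DD u' v') * DD u v := by rw [hab]; ring
      rw [e]; unfold DD; ring
    rw [div_mul_div_comm, div_mul_div_comm, ← sub_div, this]
    field_simp
  obtain ⟨g, hg⟩ : ∃ g : Matrix.SpecialLinearGroup (Fin 2) F, (g : Matrix (Fin 2) (Fin 2) F) = M :=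
    ⟨⟨M, hM⟩, rfl⟩
  have act : ∀ x, Matrix.SpecialLinearGroup.toLin' g x
      = (DD u v)⁻¹ • ((a * DD x v) • u' + (b * DD u x) • v') := by
    intro x
    ext i
    rw [Matrix.SpecialLinearGroup.toLin'_apply, Matrix.toLin'_apply, hg]
    fin_cases i <;> simp [M, Matrix.mulVec, dotProduct, Fin.sum_univ_two, DD] <;> ring
  refine ⟨g, ?_⟩
  simp only [mapT, mapSL, Projectivization.map_mk, Prod.mk.injEq]
  refine ⟨?_, ?_, ?_⟩
  · rw [Projectivization.mk_eq_mk_iff']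
    refine ⟨a, ?_⟩
    rw [LinearEquiv.coe_coe, act]
    have : DD u u = 0 := by unfold DD; ring
    rw [this, mul_zero, zero_smul, add_zero, smul_smul]
    congr 1; field_simp
  · rw [Projectivization.mk_eq_mk_iff']
    refine ⟨b, ?_⟩
    rw [LinearEquiv.coe_coe, act]
    have : DD v v = 0 := by unfold DD; ring
    rw [this, mul_zero, zero_smul, zero_add, smul_smul]
    congr 1; field_simp
  · rw [Projectivization.mk_eq_mk_iff']
    refine ⟨m * DD u' v' / DD u v, ?_⟩
    rw [LinearEquiv.coe_coe, act]
    have e1 : a * DD w v = - (m * DD v' w') := by rw [← ha]; unfold DD; ring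
    have e2 : b * DD u w = - (m * DD w' u') := by rw [← hb]; unfold DD; ring
    rw [e1, e2, div_eq_inv_mul, ← smul_smul]
    congr 1
    ext i; fin_cases i <;> simp [DD] <;> ring

end
section
set_option linter.unusedSectionVars false
variable {F : Type} [Field F] [Fintype F] [DecidableEq F]

noncomputable instance instFT : Fintype (PL F) := Fintype.ofFinite _

def inT (t : PL F × PL F × PL F) (S : Set (PL F)) : Prop := t.1 ∈ S ∧ t.2.1 ∈ S ∧ t.2.2 ∈ S

def NN (F : Type) [Field F] (k : ℕ) (t : PL F × PL F × PL F) : ℕ :=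
  {S ∈ designBlocks F k | inT t S}.ncard

theorem inT_map (g : Matrix.SpecialLinearGroup (Fin 2) F) (t : PL F × PL F × PL F)
    (S : Set (PL F)) : inT (mapT (mapSL g) t) (mapSL g '' S) ↔ inT t S := by
  have hi : Function.Injective (mapSL g) := (eSL g).injective
  simp [inT, mapT, hi.mem_set_image]

theorem NN_map (k : ℕ) (g : Matrix.SpecialLinearGroup (Fin 2) F) (t : PL F × PL F × PL F) :
    NN F k (mapT (mapSL g) t) = NN F k t := by
  have hi : Function.Injective (mapSL g) := (eSL g).injective
  unfold NN
  conv_rhs => rw [← Set.ncard_image_of_injective _ (Set.image_injective.2 hi)]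
  congr 1
  ext S
  constructor
  · rintro ⟨⟨h, rfl⟩, hS⟩
    refine ⟨mapSL (g⁻¹ * h) '' starterB F k, ⟨⟨_, rfl⟩, ?_⟩, ?_⟩
    · rw [← inT_map g, Set.image_image]
      simpa [← mapSL_mul] using hS
    · rw [Set.image_image]
      simp [← mapSL_mul]
  · rintro ⟨S', ⟨⟨h, rfl⟩, hS⟩, rfl⟩
    refine ⟨⟨g * h, ?_⟩, (inT_map g _ _).2 hS⟩
    rw [Set.image_image]
    simp [← mapSL_mul]

open Classical in
def CC (S : Set (PL F)) : ℤ := ∑ t : PL F × PL F × PL F, if inT t S then sg t else 0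

theorem CC_map (g : Matrix.SpecialLinearGroup (Fin 2) F) (S : Set (PL F)) :
    CC (mapSL g '' S) = CC S := by
  unfold CC
  rw [← Equiv.sum_comp (eT (eSL g))]
  apply Finset.sum_congr rfl
  intro t _
  have : eT (eSL g) t = mapT (mapSL g) t := rfl
  rw [this, sg_SL]
  classical exact if_congr (inT_map g t S) rfl rfl

theorem sum_NN (k : ℕ) :
    ∑ t, sg t * (NN F k t : ℤ) = (designBlocks F k).ncard * CC (starterB F k) := by
  classical
  have h1 : ∀ t, (NN F k t : ℤ) = ∑ S ∈ (designBlocks F k).toFinset, if inT t S then 1 else 0 := by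
    intro t
    rw [Finset.sum_boole, NN, ← Set.ncard_coe_finset]
    congr 2
    ext S; simp
  simp only [h1, Finset.mul_sum]
  rw [Finset.sum_comm]
  have h2 : ∀ S ∈ (designBlocks F k).toFinset,
      ∑ t, sg t * (if inT t S then (1:ℤ) else 0) = CC (starterB F k) := by
    intro S hS
    rw [Set.mem_toFinset] at hS
    obtain ⟨g, rfl⟩ := hS
    rw [← CC_map g]
    unfold CC
    apply Finset.sum_congr rfl
    intro t _
    split_ifs <;> simp
  rw [Finset.sum_congr rfl h2, Finset.sum_const, Set.ncard_eq_toFinset_card']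
  simp

theorem scale_exists (d : F) (hd : d ≠ 0) : ∃ e : (Fin 2 → F) ≃ₗ[F] (Fin 2 → F),
    ∀ u v, DD (e u) (e v) = d * DD u v := by
  let M : Matrix (Fin 2) (Fin 2) F := !![d, 0; 0, 1]
  have hM : IsUnit M.det := by simp [M, Matrix.det_fin_two_of, hd]
  refine ⟨Matrix.toLinearEquiv' M ((Matrix.isUnit_iff_isUnit_det M).2 hM).invertible, ?_⟩
  intro u v
  simp [Matrix.toLinearEquiv', DD, M, Matrix.mulVec, dotProduct, Fin.sum_univ_two]
  ring

theorem mapL_bij (e : (Fin 2 → F) ≃ₗ[F] (Fin 2 → F)) : Function.Bijective (mapL e) := by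
  rw [← Finite.injective_iff_bijective]
  exact Projectivization.map_injective _ _

/-- there are triples of each sign -/
theorem exists_sign (hF : ringChar F ≠ 2) : ∃ e : (PL F × PL F × PL F) ≃ (PL F × PL F × PL F),
    ∀ t, sg (e t) = - sg t := by
  obtain ⟨d, hd⟩ := quadraticChar_exists_neg_one hF
  have hd0 : d ≠ 0 := by rintro rfl; simp at hd
  obtain ⟨e, he⟩ := scale_exists d hd0
  refine ⟨eT (Equiv.ofBijective _ (mapL_bij e)), fun t => ?_⟩
  have : eT (Equiv.ofBijective _ (mapL_bij e)) t = mapT (mapL e) t := rfl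
  rw [this, sg_mapL e d he, hd]; ring

theorem exists_pos : ∃ t : PL F × PL F × PL F, sg t ≠ 0 := by
  refine ⟨(inftyPt F, embedPt F 0, embedPt F 1), ?_⟩
  rw [inftyPt, embedPt, embedPt, sg_mk]
  simp [DD]

theorem sg_val (t : PL F × PL F × PL F) : sg t = 0 ∨ sg t = 1 ∨ sg t = -1 := by
  unfold sg
  by_cases h : (DD t.1.rep t.2.1.rep * DD t.2.1.rep t.2.2.rep * DD t.2.2.rep t.1.rep) = 0
  · left; rw [h]; simp
  · right; exact quadraticChar_dichotomy h

theorem sum_sg (hF : ringChar F ≠ 2) : ∑ t : PL F × PL F × PL F, sg t = 0 := by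
  obtain ⟨e, he⟩ := exists_sign hF
  have := Equiv.sum_comp e (sg (F := F))
  simp only [he, Finset.sum_neg_distrib] at this
  linarith

theorem design_iff_NN (k : ℕ) : gives3Design F k ↔
    ∃ lam, 0 < lam ∧ ∀ t, sg t ≠ 0 → NN F k t = lam := by
  classical
  have key : ∀ p q r : PL F, {S ∈ designBlocks F k | (({p, q, r} : Finset (PL F)) : Set (PL F)) ⊆ S}
      = {S ∈ designBlocks F k | inT (p, q, r) S} := by
    intro p q r
    ext S
    simp [inT, Set.insert_subset_iff]
  constructor
  · rintro ⟨lam, h0, h⟩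
    refine ⟨lam, h0, ?_⟩
    rintro ⟨p, q, r⟩ ht
    rw [Ne, sg_eq_zero] at ht
    push Not at ht
    have := h {p, q, r} (Finset.card_eq_three.2 ⟨p, q, r, ht.1, ht.2.2.symm, ht.2.1, rfl⟩)
    rw [key] at this
    exact this
  · rintro ⟨lam, h0, h⟩
    refine ⟨lam, h0, ?_⟩
    intro T hT
    obtain ⟨p, q, r, h1, h2, h3, rfl⟩ := Finset.card_eq_three.1 hT
    rw [key]
    apply h
    rw [Ne, sg_eq_zero]
    push Not
    exact ⟨h1, h3, h2.symm⟩

theorem design_iff_CC (hF : ringChar F ≠ 2) (k : ℕ)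
    (hk : ∃ t, inT t (starterB F k) ∧ sg t ≠ 0) :
    gives3Design F k ↔ CC (starterB F k) = 0 := by
  rw [design_iff_NN]
  have hb : (0:ℤ) < (designBlocks F k).ncard := by
    have : (designBlocks F k).Nonempty := ⟨_, 1, rfl⟩
    exact_mod_cast (Set.ncard_pos (Set.toFinite _)).2 this
  have hs := sum_NN (F := F) k
  constructor
  · rintro ⟨lam, h0, h⟩
    have : ∑ t, sg t * (NN F k t : ℤ) = ∑ t : PL F × PL F × PL F, sg t * (lam : ℤ) := by
      apply Finset.sum_congr rfl
      intro t _
      by_cases ht : sg t = 0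
      · rw [ht]; simp
      · rw [h t ht]
    rw [this, ← Finset.sum_mul, sum_sg hF, zero_mul] at hs
    rcases mul_eq_zero.1 hs.symm with h | h
    · omega
    · exact h
  · intro h
    obtain ⟨e, he⟩ := exists_sign hF
    obtain ⟨t0, ht0⟩ := exists_pos (F := F)
    obtain ⟨tp, hp⟩ : ∃ t : PL F × PL F × PL F, sg t = 1 := by
      rcases sg_val t0 with h | h | h
      · exact absurd h ht0
      · exact ⟨t0, h⟩
      · exact ⟨e t0, by rw [he, h]; simp⟩
    have hm : sg (e tp) = -1 := by rw [he, hp]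
    set tm := e tp
    have Np : ∀ t, sg t = 1 → NN F k t = NN F k tp := by
      intro t ht
      obtain ⟨g, hg⟩ := sg_trans t tp (by rw [ht]; simp) (by rw [ht, hp])
      rw [← hg, NN_map]
    have Nm : ∀ t, sg t = -1 → NN F k t = NN F k tm := by
      intro t ht
      obtain ⟨g, hg⟩ := sg_trans t tm (by rw [ht]; simp) (by rw [ht, hm])
      rw [← hg, NN_map]
    have form : ∀ t, 2 * (sg t * (NN F k t : ℤ)) =
        ((NN F k tp : ℤ) + NN F k tm) * sg t + ((NN F k tp : ℤ) - NN F k tm) * sg t ^ 2 := by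
      intro t
      rcases sg_val t with h | h | h
      · rw [h]; simp
      · rw [Np t h, h]; ring
      · rw [Nm t h, h]; ring
    have h2 : 2 * ∑ t, (sg t * (NN F k t : ℤ)) =
        ((NN F k tp : ℤ) - NN F k tm) * ∑ t : PL F × PL F × PL F, sg t ^ 2 := by
      rw [Finset.mul_sum, Finset.sum_congr (s₁ := Finset.univ) rfl (fun t _ => form t), Finset.sum_add_distrib,
        ← Finset.mul_sum, ← Finset.mul_sum, sum_sg hF]
      ring
    have hpos : 0 < ∑ t : PL F × PL F × PL F, sg t ^ 2 := by
      apply Finset.sum_pos' (fun t _ => sq_nonneg _)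
      exact ⟨tp, Finset.mem_univ _, by rw [hp]; norm_num⟩
    rw [hs, h, mul_zero, mul_zero] at h2
    have heq : NN F k tp = NN F k tm := by
      rcases mul_eq_zero.1 h2.symm with h | h
      · omega
      · omega
    have all : ∀ t, sg t ≠ 0 → NN F k t = NN F k tp := by
      intro t ht
      rcases sg_val t with h | h | h
      · exact absurd h ht
      · exact Np t h
      · rw [Nm t h, heq]
    refine ⟨NN F k tp, ?_, all⟩
    obtain ⟨t, ht, ht0⟩ := hk
    rw [← all t ht0]
    unfold NN
    rw [Set.ncard_pos (Set.toFinite _)]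
    refine ⟨starterB F k, ⟨1, ?_⟩, ht⟩
    ext p; simp [mapSL_one]

theorem embedPt_inj : Function.Injective (embedPt F) := by
  intro x y h
  rw [embedPt, embedPt, ← DD_ne] at h
  simpa [DD, sub_eq_zero] using h

theorem sg_embed (x y z : F) : sg (embedPt F x, embedPt F y, embedPt F z) =
    quadraticChar F (x - y) * quadraticChar F (y - z) * quadraticChar F (z - x) := by
  rw [embedPt, embedPt, embedPt, sg_mk, map_mul, map_mul]
  simp [DD]

def mu (F : Type) [Field F] [Fintype F] [DecidableEq F] (k : ℕ) : Finset F :=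
  Finset.univ.filter (fun x => x ^ k = 1)

theorem CC_starter (k : ℕ) : CC (starterB F k) = ∑ x ∈ mu F k, ∑ y ∈ mu F k, ∑ z ∈ mu F k,
    quadraticChar F (x - y) * quadraticChar F (y - z) * quadraticChar F (z - x) := by
  classical
  unfold CC
  rw [← Finset.sum_filter]
  simp only [← Finset.sum_product']
  symm
  apply Finset.sum_nbij (fun t => mapT (embedPt F) t)
  · rintro ⟨x, y, z⟩ h
    simp only [mu, Finset.mem_product, Finset.mem_filter, Finset.mem_univ, true_and] at h
    simp only [Finset.mem_filter, Finset.mem_univ, true_and]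
    exact ⟨⟨x, h.1, rfl⟩, ⟨y, h.2.1, rfl⟩, ⟨z, h.2.2, rfl⟩⟩
  · rintro ⟨x, y, z⟩ _ ⟨x', y', z'⟩ _ h
    simp only [mapT, Prod.mk.injEq] at h
    rw [embedPt_inj h.1, embedPt_inj h.2.1, embedPt_inj h.2.2]
  · rintro ⟨p, q, r⟩ h
    simp only [Finset.coe_filter, Finset.mem_univ, true_and, Set.mem_ofPred_eq] at h
    obtain ⟨⟨x, hx, h1⟩, ⟨y, hy, h2⟩, ⟨z, hz, h3⟩⟩ := h
    refine ⟨(x, y, z), ?_, ?_⟩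
    · simp only [Finset.coe_product, Set.mem_prod, mu, Finset.coe_filter, Finset.mem_univ, true_and]
      exact ⟨hx, hy, hz⟩
    · simp only [mapT]
      simp only at h1 h2 h3
      rw [h1, h2, h3]
  · rintro ⟨x, y, z⟩ _
    exact (sg_embed x y z).symm

end
section
set_option linter.unusedSectionVars false
variable {F : Type} [Field F] [Fintype F] [DecidableEq F]

theorem sum_mu13 (ζ : F) (hζ : IsPrimitiveRoot ζ 13) (G : F → ℤ) :
    ∑ x ∈ mu F 13, G x = ∑ i : Fin 13, G (ζ ^ (i : ℕ)) := by
  symm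
  apply Finset.sum_nbij (fun i : Fin 13 => ζ ^ (i : ℕ))
  · intro i _
    simp only [mu, Finset.mem_filter, Finset.mem_univ, true_and]
    rw [← pow_mul, mul_comm, pow_mul, hζ.pow_eq_one, one_pow]
  · intro i _ j _ h
    exact Fin.ext (hζ.pow_inj i.2 j.2 h)
  · intro x hx
    simp only [mu, Finset.coe_filter, Finset.mem_univ, true_and, Set.mem_ofPred_eq] at hx
    obtain ⟨i, hi, h⟩ := hζ.eq_pow_of_pow_eq_one hx
    exact ⟨⟨i, hi⟩, by simp, h⟩
  · intro i _; rfl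

theorem sum_mu26 (h2 : (2 : F) ≠ 0) (ζ : F) (hζ : IsPrimitiveRoot ζ 13) (G : F → ℤ) :
    ∑ x ∈ mu F 26, G x = ∑ i : Fin 13, (G (ζ ^ (i : ℕ)) + G (-ζ ^ (i : ℕ))) := by
  have hu : mu F 26 = mu F 13 ∪ (mu F 13).image (fun x => -x) := by
    ext x
    simp only [mu, Finset.mem_union, Finset.mem_filter, Finset.mem_univ, true_and,
      Finset.mem_image]
    have e : x ^ 26 = (x ^ 13) ^ 2 := by ring
    rw [e, sq_eq_one_iff]
    apply or_congr Iff.rfl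
    constructor
    · intro h
      refine ⟨-x, ?_, by simp⟩
      rw [Odd.neg_pow (by decide), h, neg_neg]
    · rintro ⟨y, hy, rfl⟩
      rw [Odd.neg_pow (by decide), hy]
  have hd : Disjoint (mu F 13) ((mu F 13).image (fun x => -x)) := by
    rw [Finset.disjoint_left]
    intro x hx hx'
    simp only [mu, Finset.mem_filter, Finset.mem_univ, true_and, Finset.mem_image] at hx hx'
    obtain ⟨y, hy, rfl⟩ := hx'
    rw [Odd.neg_pow (by decide), hy] at hx
    apply h2
    linear_combination -hx
  rw [hu, Finset.sum_union hd, Finset.sum_image (fun x _ y _ h => neg_injective h), sum_mu13 ζ hζ,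
    sum_mu13 ζ hζ, Finset.sum_add_distrib]

theorem T3_eq (f g h : Fin 13 → ℤ) :
    ∑ i : Fin 13, ∑ j : Fin 13, ∑ l : Fin 13, f (i - j) * g (j - l) * h (l - i)
      = 13 * T3 f g h := by
  have : ∀ i : Fin 13, ∑ j : Fin 13, ∑ l : Fin 13, f (i - j) * g (j - l) * h (l - i)
      = T3 f g h := by
    intro i
    unfold T3
    rw [← Equiv.sum_comp (Equiv.addLeft i)]
    apply Finset.sum_congr rfl
    intro a _
    rw [← Equiv.sum_comp (Equiv.addLeft i)]
    apply Finset.sum_congr rfl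
    intro b _
    simp only [Equiv.coe_addLeft]
    congr 3
    · abel_nf
    · abel_nf
    · abel_nf
  rw [Finset.sum_congr rfl (fun i _ => this i)]
  simp

theorem zpow_add13 (ζ : F) (hζ : IsPrimitiveRoot ζ 13) (i j : Fin 13) :
    ζ ^ ((i + j : Fin 13) : ℕ) = ζ ^ (i : ℕ) * ζ ^ (j : ℕ) := by
  rw [Fin.val_add, ← pow_add, ← pow_mod_orderOf, ← pow_mod_orderOf ζ (_ + _), ← hζ.eq_orderOf,
    Nat.mod_mod]

theorem bs_of (x : ℤ) (h : x = 1 ∨ x = -1) : x = bs (decide (x = 1)) := by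
  rcases h with rfl | rfl <;> rfl

theorem sums_iff (h2 : (2 : F) ≠ 0) (hneg : quadraticChar F (-1) = 1)
    (ζ : F) (hζ : IsPrimitiveRoot ζ 13) :
    CC (starterB F 13) = 0 ↔ CC (starterB F 26) = 0 := by
  rw [CC_starter, CC_starter]
  simp only [sum_mu13 ζ hζ, sum_mu26 h2 ζ hζ]
  set f : Fin 13 → ℤ := fun i => quadraticChar F (1 - ζ ^ (i : ℕ)) with hf
  set h : Fin 13 → ℤ := fun i => quadraticChar F (1 + ζ ^ (i : ℕ)) with hh
  have z0 : ζ ≠ 0 := hζ.ne_zero (by norm_num)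
  have cz : ∀ i : ℕ, quadraticChar F (ζ ^ i) = 1 := by
    intro i
    have : ζ ^ i = (ζ ^ (7 * i)) ^ 2 := by
      rw [← pow_mul, show 7 * i * 2 = 13 * i + i by ring, pow_add, pow_mul, hζ.pow_eq_one]; simp
    rw [this, quadraticChar_sq_one' (pow_ne_zero _ z0)]
  have split : ∀ i j : Fin 13, ζ ^ (i : ℕ) = ζ ^ (j : ℕ) * ζ ^ ((i - j : Fin 13) : ℕ) := by
    intro i j
    rw [← zpow_add13 ζ hζ, add_sub_cancel]
  have cn : ∀ x, quadraticChar F (-x) = quadraticChar F x := by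
    intro x; rw [← neg_one_mul, map_mul, hneg, one_mul]
  have r1 : ∀ i j : Fin 13, quadraticChar F (ζ ^ (i : ℕ) - ζ ^ (j : ℕ)) = f (i - j) := by
    intro i j
    rw [split i j, show ∀ a b : F, a * b - a = -(a * (1 - b)) by intros; ring, cn, map_mul, cz,
      one_mul]
  have r2 : ∀ i j : Fin 13, quadraticChar F (ζ ^ (i : ℕ) - -ζ ^ (j : ℕ)) = h (i - j) := by
    intro i j
    rw [split i j, show ∀ a b : F, a * b - -a = (a * (1 + b)) by intros; ring, map_mul, cz,
      one_mul]
  have r3 : ∀ i j : Fin 13, quadraticChar F (-ζ ^ (i : ℕ) - ζ ^ (j : ℕ)) = h (i - j) := by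
    intro i j
    rw [← r2, ← cn]; congr 1; ring
  have r4 : ∀ i j : Fin 13, quadraticChar F (-ζ ^ (i : ℕ) - -ζ ^ (j : ℕ)) = f (i - j) := by
    intro i j
    rw [← r1, ← cn]; congr 1; ring
  simp only [r1, r2, r3, r4, Finset.sum_add_distrib, T3_eq]
  have fne : ∀ i : Fin 13, i ≠ 0 → (1 - ζ ^ (i : ℕ)) ≠ 0 := by
    intro i hi hz
    have : ζ ^ (i : ℕ) = ζ ^ 0 := by rw [pow_zero]; linear_combination -hz
    exact hi (Fin.ext (hζ.pow_inj i.2 (by norm_num) this))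
  have fv : ∀ i : Fin 13, i ≠ 0 → f i = 1 ∨ f i = -1 := fun i hi =>
    quadraticChar_dichotomy (fne i hi)
  have f0 : f 0 = 0 := by simp [hf]
  have fn : ∀ i, f (-i) = f i := by
    intro i
    have a := r1 0 i
    have b := r1 i 0
    rw [zero_sub] at a
    rw [sub_zero] at b
    rw [← a, ← b, ← cn]; congr 1; ring
  have ftf : f = tf (decide (f 1 = 1)) (decide (f 2 = 1)) (decide (f 3 = 1)) (decide (f 4 = 1))
      (decide (f 5 = 1)) (decide (f 6 = 1)) := by
    funext i
    fin_cases i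
    · exact f0
    · exact bs_of _ (fv 1 (by decide))
    · exact bs_of _ (fv 2 (by decide))
    · exact bs_of _ (fv 3 (by decide))
    · exact bs_of _ (fv 4 (by decide))
    · exact bs_of _ (fv 5 (by decide))
    · exact bs_of _ (fv 6 (by decide))
    · exact (fn 6).trans (bs_of _ (fv 6 (by decide)))
    · exact (fn 5).trans (bs_of _ (fv 5 (by decide)))
    · exact (fn 4).trans (bs_of _ (fv 4 (by decide)))
    · exact (fn 3).trans (bs_of _ (fv 3 (by decide)))
    · exact (fn 2).trans (bs_of _ (fv 2 (by decide)))
    · exact (fn 1).trans (bs_of _ (fv 1 (by decide)))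
  have hth : h = th (decide (h 0 = 1)) f := by
    funext i
    unfold th
    split_ifs with hi
    · rw [hi]
      apply bs_of
      apply quadraticChar_dichotomy
      simpa [one_add_one_eq_two] using h2
    · have e : f (i + i) = f i * h i := by
        simp only [hf, hh]
        rw [← map_mul, zpow_add13 ζ hζ]
        congr 1; ring
      have e2 : f i * f i = 1 := by
        rcases fv i hi with h | h <;> rw [h] <;> norm_num
      rw [e, ← mul_assoc, e2, one_mul]
  have K := key (decide (f 1 = 1)) (decide (f 2 = 1)) (decide (f 3 = 1)) (decide (f 4 = 1))
      (decide (f 5 = 1)) (decide (f 6 = 1)) (decide (h 0 = 1))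
  rw [← ftf, ← hth] at K
  clear_value f h
  constructor
  · intro H
    have := K.1 (by linarith)
    linarith
  · intro H
    have := K.2 (by linarith)
    linarith

theorem main_iff (hq : Fintype.card F % 52 = 1) :
    gives3Design F 13 ↔ gives3Design F 26 := by
  have hF : ringChar F ≠ 2 := by
    rw [Ne, FiniteField.even_card_iff_char_two]; omega
  have h2 : (2 : F) ≠ 0 := Ring.two_ne_zero hF
  have hneg : quadraticChar F (-1) = 1 := by
    rw [quadraticChar_one_iff_isSquare (by simp), FiniteField.isSquare_neg_one_iff]; omega
  have h13 : 13 ∣ Fintype.card Fˣ := by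
    rw [Fintype.card_units]; omega
  have : Fact (Nat.Prime 13) := ⟨by norm_num⟩
  obtain ⟨u, hu⟩ := exists_prime_orderOf_dvd_card 13 h13
  have hζ : IsPrimitiveRoot (u : F) 13 := by
    have := IsPrimitiveRoot.orderOf u
    rw [hu] at this
    exact IsPrimitiveRoot.coe_units_iff.2 this
  have hne : ∀ i j : ℕ, i < 13 → j < 13 → i ≠ j → embedPt F ((u : F) ^ i) ≠ embedPt F ((u : F) ^ j) :=
    fun i j hi hj hij h => hij (hζ.pow_inj hi hj (embedPt_inj h))
  have hk : ∀ k, 13 ∣ k → ∃ t, inT t (starterB F k) ∧ sg t ≠ 0 := by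
    rintro k ⟨m, rfl⟩
    have hm : ∀ i : ℕ, embedPt F ((u : F) ^ i) ∈ starterB F (13 * m) := by
      intro i
      refine ⟨_, ?_, rfl⟩
      change ((u : F) ^ i) ^ (13 * m) = 1
      rw [← pow_mul, mul_comm, mul_assoc, pow_mul, hζ.pow_eq_one, one_pow]
    refine ⟨(embedPt F ((u : F) ^ 0), embedPt F ((u : F) ^ 1), embedPt F ((u : F) ^ 2)),
      ⟨hm 0, hm 1, hm 2⟩, ?_⟩
    rw [Ne, sg_eq_zero]
    push Not
    exact ⟨hne _ _ (by norm_num) (by norm_num) (by norm_num),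
      hne _ _ (by norm_num) (by norm_num) (by norm_num),
      hne _ _ (by norm_num) (by norm_num) (by norm_num)⟩
  rw [design_iff_CC hF 13 (hk 13 (by norm_num)), design_iff_CC hF 26 (hk 26 (by norm_num))]
  exact sums_iff h2 hneg _ hζ

end

/-- Theorem 5.1, (i) ↔ (ii): for `q ≡ 1 (mod 52)`, `(q,13)` gives a 3-design iff
`(q,26)` gives a 3-design. -/
theorem stmt_17 (F : Type) [Field F] [Fintype F] [DecidableEq F]
    (q : ℕ) (hq : Fintype.card F = q) (hq52 : q % 52 = 1) :
    gives3Design F 13 ↔ gives3Design F 26 := by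
  exact main_iff (by rw [hq]; exact hq52)
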